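/- Let m ≥ 1 be an integer, r, s > −1 real numbers, and κ = (κ_1 ≥ ⋯ ≥ κ_m ≥ 0) a partition with at most m parts. Then (1/m!) ∫_{[0,1]^m} det( x_j^{κ_i + m − i} )_{i,j=1}^m · det( x_j^{m − i} )_{i,j=1}^m · ∏_{i=1}^m x_i^r (1−x_i)^s dx_1 ⋯ dx_m = ∏_{1 ≤ i < j ≤ m} (κ_i − κ_j + j − i) · ∏_{i=1}^m Γ(κ_i + r + m − i + 1) Γ(s + m − i + 1) / Γ(κ_i + r + s + 2m − i + 1), where Γ is the real Gamma function. -/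

import Mathlib

open MeasureTheory

/-!
By Andréief's identity the integral is `m!` times a determinant of one-dimensional integrals.
Because the Vandermonde product only sees differences of the `x_j`, the factor
`det (x_j ^ (m - i))` equals `det ((1 - x_j) ^ (i - 1))`, and the one-dimensional integrals become
the Beta values `B(κ_i + r + m - i + 1, s + j)`. Writing `Γ(z + k) = (z)_k Γ(z)` with `k = m - j`
pulls all Gamma factors out of the rows and columns. What remains is the matrix of the monic
polynomials `(z)_(m - j)` at `z = κ_i + m - i` up to a shift depending on `j`, whose determinant is
again a Vandermonde product.
-/

section DeterminantIntegrals

variable {ι 𝕜 : Type*} [Fintype ι] [DecidableEq ι] [RCLike 𝕜]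

lemma integrable_det {X : ι → Type*} [∀ j, MeasurableSpace (X j)] {μ : ∀ j, Measure (X j)}
    [∀ j, SigmaFinite (μ j)] {f : ι → (j : ι) → X j → 𝕜}
    (hf : ∀ i j, Integrable (f i j) (μ j)) :
    Integrable (fun x ↦ (Matrix.of fun i j ↦ f i j (x j)).det) (Measure.pi μ) := by
  simp only [Matrix.det_apply', Matrix.of_apply]
  exact integrable_finsetSum _ fun σ _ ↦
    (Integrable.fintype_prod_dep fun j ↦ hf (σ j) j).const_mul _

lemma integral_det {X : ι → Type*} [∀ j, MeasurableSpace (X j)] {μ : ∀ j, Measure (X j)}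
    [∀ j, SigmaFinite (μ j)] {f : ι → (j : ι) → X j → 𝕜}
    (hf : ∀ i j, Integrable (f i j) (μ j)) :
    ∫ x, (Matrix.of fun i j ↦ f i j (x j)).det ∂Measure.pi μ =
      (Matrix.of fun i j ↦ ∫ y, f i j y ∂μ j).det := by
  simp only [Matrix.det_apply', Matrix.of_apply]
  rw [integral_finsetSum _ fun σ _ ↦
    (Integrable.fintype_prod_dep fun j ↦ hf (σ j) j).const_mul _]
  refine Finset.sum_congr rfl fun σ _ ↦ ?_
  rw [integral_const_mul, integral_fintype_prod_eq_prod fun j ↦ f (σ j) j]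

lemma det_mul_det_eq_sum_sign_mul_det {R : Type*} [CommRing R] (A B : Matrix ι ι R) :
    A.det * B.det =
      ∑ σ : Equiv.Perm ι, (Equiv.Perm.sign σ : R) *
        (Matrix.of fun i j ↦ A (σ j) j * B i j).det := by
  simp only [Matrix.det_apply' A, Finset.sum_mul, Matrix.det_mul_row, mul_assoc]

/-- Andréief's identity. -/
theorem integral_det_mul_det {X : Type*} [MeasurableSpace X] {μ : Measure X} [SigmaFinite μ]
    {f g : ι → X → 𝕜} (hfg : ∀ i j, Integrable (fun x ↦ f i x * g j x) μ) :
    ∫ x, (Matrix.of fun i j ↦ f i (x j)).det * (Matrix.of fun i j ↦ g i (x j)).det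
        ∂Measure.pi (fun _ : ι ↦ μ) =
      (Fintype.card ι).factorial * (Matrix.of fun i j ↦ ∫ x, f i x * g j x ∂μ).det := by
  set M : Matrix ι ι 𝕜 := Matrix.of fun i j ↦ ∫ x, f i x * g j x ∂μ
  have integral_term (σ : Equiv.Perm ι) :
      ∫ x, (Matrix.of fun i j ↦ f (σ j) (x j) * g i (x j)).det ∂Measure.pi (fun _ : ι ↦ μ) =
        (Equiv.Perm.sign σ : 𝕜) * M.det := by
    rw [integral_det (f := fun i j y ↦ f (σ j) y * g i y) fun i j ↦ hfg (σ j) i,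
      ← Matrix.det_permute, ← Matrix.det_transpose]
    rfl
  have sign_mul_self (σ : Equiv.Perm ι) :
      (Equiv.Perm.sign σ : 𝕜) * (Equiv.Perm.sign σ : 𝕜) = 1 := by
    rw [← Int.cast_mul, ← Units.val_mul, Int.units_mul_self, Units.val_one, Int.cast_one]
  simp only [det_mul_det_eq_sum_sign_mul_det, Matrix.of_apply]
  rw [integral_finsetSum _ fun σ _ ↦
    (integrable_det (f := fun i j y ↦ f (σ j) y * g i y) fun i j ↦ hfg (σ j) i).const_mul _]
  simp only [integral_const_mul, integral_term, ← mul_assoc, sign_mul_self, one_mul,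
    Finset.sum_const, Finset.card_univ, Fintype.card_perm, nsmul_eq_mul]

end DeterminantIntegrals

section ReversedVandermonde

variable {R : Type*} [CommRing R] {n : ℕ}

lemma det_pow_rev (v : Fin n → R) :
    (Matrix.of fun i j : Fin n ↦ v i ^ (j.rev : ℕ)).det =
      ∏ i, ∏ j ∈ Finset.Ioi i, (v i - v j) := by
  simpa [Matrix.projVandermonde, Matrix.rectVandermonde] using
    Matrix.det_projVandermonde (fun _ ↦ 1) v

lemma det_sub_pow_eq_det_pow_rev (c : R) (v : Fin n → R) :
    (Matrix.of fun i j : Fin n ↦ (c - v j) ^ (i : ℕ)).det =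
      (Matrix.of fun i j : Fin n ↦ v j ^ (i.rev : ℕ)).det := by
  calc (Matrix.of fun i j : Fin n ↦ (c - v j) ^ (i : ℕ)).det
      = (Matrix.vandermonde fun i ↦ c - v i).det := by
        rw [← Matrix.det_transpose]; rfl
    _ = ∏ i, ∏ j ∈ Finset.Ioi i, (v i - v j) := by
        simp only [Matrix.det_vandermonde, sub_sub_sub_cancel_left]
    _ = (Matrix.of fun i j : Fin n ↦ v j ^ (i.rev : ℕ)).det := by
        rw [← det_pow_rev, ← Matrix.det_transpose]; rfl

lemma det_eval_rev_of_monic (v : Fin n → R) (p : Fin n → Polynomial R)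
    (natDegree_p : ∀ j, (p j).natDegree = j.rev) (monic_p : ∀ j, (p j).Monic) :
    (Matrix.of fun i j : Fin n ↦ (p j).eval (v i)).det =
      ∏ i, ∏ j ∈ Finset.Ioi i, (v i - v j) := by
  calc (Matrix.of fun i j : Fin n ↦ (p j).eval (v i)).det
      = ((Matrix.of fun i j ↦ (p j).eval (v i)).submatrix Fin.revPerm Fin.revPerm).det :=
        (Matrix.det_submatrix_equiv_self Fin.revPerm _).symm
    _ = (Matrix.vandermonde (v ∘ Fin.rev)).det := by
        rw [Matrix.det_eval_matrixOfPolynomials_eq_det_vandermonde (v ∘ Fin.rev) (p ∘ Fin.rev)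
          (by simp [natDegree_p]) (by simp [monic_p])]
        rfl
    _ = ((Matrix.of fun i j ↦ v i ^ (j.rev : ℕ)).submatrix Fin.revPerm Fin.revPerm).det := by
        congr 1 with i j
        simp [-Fin.val_rev]
    _ = ∏ i, ∏ j ∈ Finset.Ioi i, (v i - v j) := by
        rw [Matrix.det_submatrix_equiv_self, det_pow_rev]

lemma det_ascPochhammer_rev [IsDomain R] (v c : Fin n → R) :
    (Matrix.of fun i j : Fin n ↦ (ascPochhammer R j.rev).eval (v i + c j)).det =
      ∏ i, ∏ j ∈ Finset.Ioi i, (v i - v j) := by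
  rw [← det_eval_rev_of_monic v
    fun j ↦ (ascPochhammer R j.rev).comp (Polynomial.X + Polynomial.C (c j))]
  · simp only [Polynomial.eval_comp, Polynomial.eval_add, Polynomial.eval_X, Polynomial.eval_C]
  · simp [Polynomial.natDegree_comp]
  · exact fun j ↦ (monic_ascPochhammer R _).comp_X_add_C _

end ReversedVandermonde

section Beta

open ProbabilityTheory (beta)

lemma Gamma_add_natCast_eq_ascPochhammer_mul {a : ℝ} (ha : ∀ k : ℕ, a ≠ -k) (n : ℕ) :
    Real.Gamma (a + n) = (ascPochhammer ℝ n).eval a * Real.Gamma a := by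
  induction n with
  | zero => simp
  | succ n ih =>
    have han : a + n ≠ 0 := fun h ↦ ha n (eq_neg_of_add_eq_zero_left h)
    rw [Nat.cast_succ, ← add_assoc, Real.Gamma_add_one han, ih, ascPochhammer_succ_eval]
    ring

lemma beta_eq_ascPochhammer_mul_div {a b : ℝ} (hab : ∀ k : ℕ, a + b ≠ -k) (n : ℕ) :
    beta a b =
      (ascPochhammer ℝ n).eval (a + b) * (Real.Gamma a * Real.Gamma b) /
        Real.Gamma (a + b + n) := by
  have hΓ : Real.Gamma (a + b + n) ≠ 0 := Real.Gamma_ne_zero fun k h ↦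
    hab (n + k) (by push_cast; linarith)
  rw [Gamma_add_natCast_eq_ascPochhammer_mul hab] at hΓ ⊢
  rw [mul_div_mul_left _ _ (left_ne_zero_of_mul hΓ), beta]

theorem det_beta {n : ℕ} (a : Fin n → ℝ) (b : ℝ) (hab : ∀ i, ∀ k : ℕ, a i + b ≠ -k) :
    (Matrix.of fun i j : Fin n ↦ beta (a i) (b + (j : ℕ))).det =
      (∏ i, ∏ j ∈ Finset.Ioi i, (a i - a j)) *
        ∏ i : Fin n, Real.Gamma (a i) * Real.Gamma (b + (i.rev : ℕ)) /
          Real.Gamma (a i + b + n - 1) := by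
  have entry (i j : Fin n) : beta (a i) (b + (j : ℕ)) =
      Real.Gamma (b + (j : ℕ)) * (Real.Gamma (a i) / Real.Gamma (a i + b + n - 1) *
        (ascPochhammer ℝ j.rev).eval (a i + (b + (j : ℕ)))) := by
    have ne_neg (k : ℕ) : a i + (b + (j : ℕ)) ≠ -k := fun h ↦
      hab i (j + k) (by push_cast; linarith)
    have add_rev : a i + (b + (j : ℕ)) + (j.rev : ℕ) = a i + b + n - 1 := by
      rw [Fin.val_rev, Nat.cast_sub j.isLt]; push_cast; ring
    rw [beta_eq_ascPochhammer_mul_div ne_neg j.rev, add_rev]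
    ring
  have prod_rev : ∏ i : Fin n, Real.Gamma (b + (i.rev : ℕ)) =
      ∏ i : Fin n, Real.Gamma (b + (i : ℕ)) :=
    Equiv.prod_comp Fin.revPerm fun i : Fin n ↦ Real.Gamma (b + (i : ℕ))
  calc (Matrix.of fun i j : Fin n ↦ beta (a i) (b + (j : ℕ))).det
      = (∏ j : Fin n, Real.Gamma (b + (j : ℕ))) *
          ((∏ i, Real.Gamma (a i) / Real.Gamma (a i + b + n - 1)) *
            ∏ i, ∏ j ∈ Finset.Ioi i, (a i - a j)) := by
        simp only [entry]
        rw [← det_ascPochhammer_rev a fun j : Fin n ↦ b + (j : ℕ), ← Matrix.det_mul_column,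
          ← Matrix.det_mul_row]
        rfl
    _ = _ := by
        simp only [Finset.prod_div_distrib, Finset.prod_mul_distrib, prod_rev]
        ring

lemma ofReal_rpow_mul_one_sub_rpow {a b x : ℝ} (hx : x ∈ Set.Ioc 0 1) :
    ((x ^ a * (1 - x) ^ b : ℝ) : ℂ) =
      (x : ℂ) ^ (((a + 1 : ℝ) : ℂ) - 1) * (1 - (x : ℂ)) ^ (((b + 1 : ℝ) : ℂ) - 1) := by
  rw [Complex.ofReal_mul, Complex.ofReal_cpow hx.1.le, Complex.ofReal_cpow (sub_nonneg.2 hx.2)]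
  push_cast
  simp only [add_sub_cancel_right]

lemma integrableOn_rpow_mul_one_sub_rpow {a b : ℝ} (ha : -1 < a) (hb : -1 < b) :
    IntegrableOn (fun x : ℝ ↦ x ^ a * (1 - x) ^ b) (Set.Ioc 0 1) := by
  have h := Complex.betaIntegral_convergent (u := (a + 1 : ℝ)) (v := (b + 1 : ℝ))
    (by rw [Complex.ofReal_re]; linarith) (by rw [Complex.ofReal_re]; linarith)
  rw [intervalIntegrable_iff_integrableOn_Ioc_of_le zero_le_one] at h
  exact (h.congr_fun (fun x hx ↦ (ofReal_rpow_mul_one_sub_rpow hx).symm) measurableSet_Ioc).re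

lemma setIntegral_rpow_mul_one_sub_rpow {a b : ℝ} (ha : -1 < a) (hb : -1 < b) :
    ∫ x : ℝ in Set.Ioc 0 1, x ^ a * (1 - x) ^ b = beta (a + 1) (b + 1) := by
  rw [ProbabilityTheory.beta_eq_betaIntegralReal _ _ (by linarith) (by linarith),
    Complex.betaIntegral, intervalIntegral.integral_of_le zero_le_one,
    ← setIntegral_congr_fun measurableSet_Ioc fun x hx ↦ ofReal_rpow_mul_one_sub_rpow hx,
    integral_complex_ofReal, Complex.ofReal_re]

lemma rpow_mul_rpow_one_sub_ae_eq (a b c d : ℝ) :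
    (fun x : ℝ ↦ x ^ a * x ^ b * ((1 - x) ^ c * (1 - x) ^ d))
      =ᵐ[volume.restrict (Set.Ioc 0 1)] fun x ↦ x ^ (a + b) * (1 - x) ^ (c + d) := by
  rw [← restrict_Ioo_eq_restrict_Ioc]
  filter_upwards [self_mem_ae_restrict measurableSet_Ioo] with x hx
  rw [Real.rpow_add hx.1, Real.rpow_add (sub_pos.2 hx.2)]

theorem integral_det_rpow_mul_det_pow_rev {n : ℕ} {r s : ℝ} (a : Fin n → ℝ)
    (ha : ∀ i, -1 < r + a i) (hs : -1 < s) :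
    ∫ x : Fin n → ℝ, (Matrix.of fun i j : Fin n ↦ x j ^ a i).det *
        (Matrix.of fun i j : Fin n ↦ x j ^ (i.rev : ℕ)).det * ∏ i, x i ^ r * (1 - x i) ^ s
        ∂(Measure.pi fun _ ↦ volume.restrict (Set.Ioc 0 1)) =
      n.factorial *
        (Matrix.of fun i j : Fin n ↦ beta (r + a i + 1) (s + 1 + (j : ℕ))).det := by
  have hs' (j : Fin n) : -1 < s + (j : ℕ) := by
    linarith [Nat.cast_nonneg (α := ℝ) (j : ℕ)]
  have weight_ae_eq (i j : Fin n) :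
      (fun x : ℝ ↦ x ^ r * x ^ a i * ((1 - x) ^ s * (1 - x) ^ (j : ℕ)))
        =ᵐ[volume.restrict (Set.Ioc 0 1)] fun x ↦ x ^ (r + a i) * (1 - x) ^ (s + (j : ℕ)) := by
    simpa only [Real.rpow_natCast] using rpow_mul_rpow_one_sub_ae_eq r (a i) s (j : ℕ)
  have integral_entry (i j : Fin n) :
      ∫ x in Set.Ioc 0 1, x ^ r * x ^ a i * ((1 - x) ^ s * (1 - x) ^ (j : ℕ)) =
        beta (r + a i + 1) (s + 1 + (j : ℕ)) := by
    rw [integral_congr_ae (weight_ae_eq i j), setIntegral_rpow_mul_one_sub_rpow (ha i) (hs' j),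
      add_right_comm s]
  simp only [← integral_entry]
  have andreief := integral_det_mul_det (μ := volume.restrict (Set.Ioc (0 : ℝ) 1))
    (f := fun i x ↦ x ^ r * x ^ a i) (g := fun (j : Fin n) x ↦ (1 - x) ^ s * (1 - x) ^ (j : ℕ))
    fun i j ↦ (integrableOn_rpow_mul_one_sub_rpow (ha i) (hs' j)).congr (weight_ae_eq i j).symm
  rw [Fintype.card_fin] at andreief
  rw [← andreief]
  congr 1 with x
  have det_rpow_weighted := Matrix.det_mul_row (fun j ↦ x j ^ r) (Matrix.of fun i j ↦ x j ^ a i)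
  have det_one_sub_weighted := Matrix.det_mul_row (fun j ↦ (1 - x j) ^ s)
    (Matrix.of fun i j : Fin n ↦ (1 - x j) ^ (i : ℕ))
  simp only [Matrix.of_apply, det_sub_pow_eq_det_pow_rev] at det_rpow_weighted det_one_sub_weighted
  rw [det_rpow_weighted, det_one_sub_weighted, Finset.prod_mul_distrib]
  ring

end Beta

theorem kadell_integral_general (m : ℕ) (r s : ℝ) (hs : -1 < s) (κ : Fin m → ℝ)
    (hκ : ∀ i : Fin m, -1 < r + (κ i + ((m - 1 - i.val : ℕ) : ℝ))) :
    (1 / (Nat.factorial m : ℝ)) *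
      ∫ x : Fin m → ℝ,
          (Matrix.of fun i j : Fin m ↦ x j ^ (κ i + ((m - 1 - i.val : ℕ) : ℝ))).det *
            (Matrix.of fun i j : Fin m ↦ x j ^ (m - 1 - i.val)).det *
            ∏ i : Fin m, x i ^ r * (1 - x i) ^ s
          ∂(Measure.pi fun _ : Fin m ↦ volume.restrict (Set.Ioc (0 : ℝ) 1))
      = (∏ i : Fin m, ∏ j ∈ Finset.Ioi i, (κ i - κ j + (j.val : ℝ) - (i.val : ℝ))) *
        ∏ i : Fin m,
          Real.Gamma (κ i + r + ((m - 1 - i.val : ℕ) : ℝ) + 1) *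
            Real.Gamma (s + ((m - 1 - i.val : ℕ) : ℝ) + 1) /
            Real.Gamma (κ i + r + s + ((m - 1 - i.val : ℕ) : ℝ) + (m : ℝ) + 1) := by
  have rev_eq (i : Fin m) : m - 1 - i.val = i.rev := by rw [Fin.val_rev]; omega
  have cast_rev (i : Fin m) : ((i.rev : ℕ) : ℝ) = m - (i.val + 1) := by
    rw [Fin.val_rev, Nat.cast_sub i.isLt]; push_cast; rfl
  simp only [rev_eq] at hκ ⊢
  have ne_neg (i : Fin m) (k : ℕ) : r + (κ i + (i.rev : ℕ)) + 1 + (s + 1) ≠ -k := fun h ↦ by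
    linarith [hκ i, Nat.cast_nonneg (α := ℝ) k]
  rw [integral_det_rpow_mul_det_pow_rev _ hκ hs, det_beta _ _ ne_neg, one_div,
    inv_mul_cancel_left₀ (by positivity)]
  congr 1
  · refine Finset.prod_congr rfl fun i _ ↦ Finset.prod_congr rfl fun j _ ↦ ?_
    rw [cast_rev, cast_rev]
    ring
  · refine Finset.prod_congr rfl fun i _ ↦ ?_
    congr 1
    · congr 2 <;> ring
    · congr 1
      ring

/-- Kadell's integral: for `m ≥ 1`, `r, s > -1` and a partition `κ` with at most `m` parts,
`(1/m!) ∫_{[0,1]^m} det(x_j^{κ_i + m - i}) · det(x_j^{m - i}) · ∏_i x_i^r (1 - x_i)^s dx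
  = ∏_{i<j} (κ_i - κ_j + j - i) · ∏_i Γ(κ_i + r + m - i + 1) Γ(s + m - i + 1) / Γ(κ_i + r + s + 2m - i + 1)`.
Indices `i, j : Fin m` correspond to `i + 1, j + 1 ∈ {1, …, m}`, so `m - i` reads
`m - 1 - i.val` and `2m - i` reads `(m - 1 - i.val) + m`. -/
theorem kadell_integral (m : ℕ) (hm : 1 ≤ m)
    (r s : ℝ) (hr : -1 < r) (hs : -1 < s)
    (κ : Fin m → ℕ) (hκ : Antitone κ) :
    (1 / (Nat.factorial m : ℝ)) *
      ∫ x : Fin m → ℝ,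
          (Matrix.of fun i j : Fin m => x j ^ (κ i + (m - 1 - i.val))).det *
            (Matrix.of fun i j : Fin m => x j ^ (m - 1 - i.val)).det *
            ∏ i : Fin m, x i ^ r * (1 - x i) ^ s
          ∂(Measure.pi fun _ : Fin m => volume.restrict (Set.Ioc (0:ℝ) 1))
      = (∏ i : Fin m, ∏ j ∈ Finset.Ioi i,
            ((κ i : ℝ) - (κ j : ℝ) + (j.val : ℝ) - (i.val : ℝ))) *
        ∏ i : Fin m,
          Real.Gamma ((κ i : ℝ) + r + ((m - 1 - i.val : ℕ) : ℝ) + 1) *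
            Real.Gamma (s + ((m - 1 - i.val : ℕ) : ℝ) + 1) /
            Real.Gamma ((κ i : ℝ) + r + s + ((m - 1 - i.val : ℕ) : ℝ) + (m : ℝ) + 1) := by
  exact_mod_cast kadell_integral_general m r s hs (fun i ↦ (κ i : ℝ)) fun i ↦
    hr.trans_le (le_add_of_nonneg_right (by positivity))
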